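/- Let F be a field of characteristic zero, n a natural number, and f : A → B a homomorphism of commutative F-algebras. Let TS^n f : TS^n_F(A) → TS^n_F(B) be the restriction of f^{⊗n} to symmetric tensors. Then the kernel of TS^n f is generated as an ideal of TS^n_F(A) by the elements e_1^n(a) with a ∈ ker f. -/

import Mathlib

open scoped TensorProduct
open PiTensorProduct

universe u v w

namespace SymmetricProduct

set_option linter.unusedSectionVars false

variable (F : Type u) [Field F] [CharZero F] (A : Type v) [CommRing A] [Algebra F A] (n : ℕ)

/-- The algebra homomorphism on the `n`-fold tensor power permuting factors by `σ`. -/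
noncomputable def permHom (σ : Equiv.Perm (Fin n)) :
    (⨂[F] _ : Fin n, A) →ₐ[F] (⨂[F] _ : Fin n, A) :=
  PiTensorProduct.liftAlgHom (MultilinearMap.domDomCongr σ (PiTensorProduct.tprod F))
    (by simp [MultilinearMap.domDomCongr_apply]; rfl)
    (fun x y => by
      simp only [MultilinearMap.domDomCongr_apply]
      rw [tprod_mul_tprod]; rfl)

@[simp] lemma permHom_tprod (σ : Equiv.Perm (Fin n)) (x : Fin n → A) :
    permHom F A n σ (tprod F x) = tprod F (fun i => x (σ i)) := by
  simp [permHom]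

/-- `TS^n_F(A)`: the subalgebra of symmetric tensors in the `n`-fold tensor power of `A`. -/
noncomputable def TS : Subalgebra F (⨂[F] _ : Fin n, A) where
  carrier := {x | ∀ σ : Equiv.Perm (Fin n), permHom F A n σ x = x}
  mul_mem' := fun hx hy σ => by rw [_root_.map_mul, hx σ, hy σ]
  add_mem' := fun hx hy σ => by rw [_root_.map_add, hx σ, hy σ]
  one_mem' := fun σ => map_one _
  algebraMap_mem' := fun r σ => AlgHom.commutes _ r

/-- `e_i^n(a)`: the sum over `i`-element subsets `S` of `Fin n` of the elementary tensors
having `a` in the slots of `S` and `1` elsewhere. -/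
noncomputable def esym (i : ℕ) (a : A) : ⨂[F] _ : Fin n, A :=
  ∑ S ∈ Finset.powersetCard i (Finset.univ : Finset (Fin n)),
    tprod F (fun j => if j ∈ S then a else 1)

lemma esym_mem (i : ℕ) (a : A) : esym F A n i a ∈ TS F A n := by
  intro σ
  rw [esym, map_sum]
  simp only [permHom_tprod]
  refine Finset.sum_nbij' (fun S => S.map σ.symm.toEmbedding)
    (fun S => S.map σ.toEmbedding) ?_ ?_ ?_ ?_ ?_
  · intro S hS
    simp only [Finset.mem_powersetCard_univ, Finset.card_map] at hS ⊢
    exact hS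
  · intro S hS
    simp only [Finset.mem_powersetCard_univ, Finset.card_map] at hS ⊢
    exact hS
  · intro S hS
    ext j
    simp
  · intro S hS
    ext j
    simp
  · intro S hS
    congr 1
    funext j
    have hiff : (σ j ∈ S) ↔ (j ∈ Finset.map σ.symm.toEmbedding S) := by
      constructor
      · intro h
        exact Finset.mem_map.2 ⟨σ j, h, σ.symm_apply_apply j⟩
      · intro h
        obtain ⟨s, hs, rfl⟩ := Finset.mem_map.1 h
        simpa using hs
    simp only [hiff]

/-- `e_i^n(a)` as an element of `TS^n_F(A)`. -/
noncomputable def esymT (i : ℕ) (a : A) : TS F A n := ⟨esym F A n i a, esym_mem F A n i a⟩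

lemma tprod_const_mem (a : A) : (tprod F (fun _ : Fin n => a)) ∈ TS F A n := fun σ => by
  simp

/-- `a^{⊗ n}` as an element of `TS^n_F(A)`. -/
noncomputable def tpow (a : A) : TS F A n := ⟨tprod F (fun _ : Fin n => a), tprod_const_mem F A n a⟩


/-- The `n`-fold tensor power `f^{⊗n}` of an algebra homomorphism `f : A → B`. -/
noncomputable def mapPow {B : Type v} [CommRing B] [Algebra F B] (f : A →ₐ[F] B) :
    (⨂[F] _ : Fin n, A) →ₐ[F] (⨂[F] _ : Fin n, B) :=
  PiTensorProduct.liftAlgHom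
    ((PiTensorProduct.tprod F).compLinearMap (fun _ : Fin n => f.toLinearMap))
    (by
      simp only [MultilinearMap.compLinearMap_apply, AlgHom.toLinearMap_apply, Pi.one_apply,
        _root_.map_one]
      rfl)
    (fun x y => by
      simp only [MultilinearMap.compLinearMap_apply, AlgHom.toLinearMap_apply]
      rw [tprod_mul_tprod]
      congr 1
      funext i
      simp)

@[simp] lemma mapPow_tprod {B : Type v} [CommRing B] [Algebra F B] (f : A →ₐ[F] B)
    (x : Fin n → A) :
    mapPow F A n f (tprod F x) = tprod F (fun i => f (x i)) := by
  simp [mapPow]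

lemma permHom_mapPow {B : Type v} [CommRing B] [Algebra F B] (σ : Equiv.Perm (Fin n))
    (f : A →ₐ[F] B) (x : ⨂[F] _ : Fin n, A) :
    permHom F B n σ (mapPow F A n f x) = mapPow F A n f (permHom F A n σ x) := by
  have h : (permHom F B n σ).comp (mapPow F A n f)
      = (mapPow F A n f).comp (permHom F A n σ) := by
    ext i a
    simp [PiTensorProduct.singleAlgHom_apply]
  exact DFunLike.congr_fun h x

/-- `TS^n f` : the restriction of `f^{⊗n}` to symmetric tensors. -/
noncomputable def TSmap {B : Type v} [CommRing B] [Algebra F B] (f : A →ₐ[F] B) :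
    TS F A n →ₐ[F] TS F B n :=
  AlgHom.codRestrict ((mapPow F A n f).comp (TS F A n).val) (TS F B n)
    (fun x σ => by
      simp only [AlgHom.comp_apply, Subalgebra.coe_val]
      rw [permHom_mapPow, x.2 σ])


/-- Symmetrization, valued in the symmetric tensors. -/
noncomputable def symL : (⨂[F] _ : Fin n, A) →ₗ[F] TS F A n :=
  LinearMap.codRestrict (Subalgebra.toSubmodule (TS F A n))
    (∑ σ : Equiv.Perm (Fin n), (permHom F A n σ).toLinearMap)
    (fun x => by
      change ∀ τ, _
      intro τ
      have key : ∀ σ : Equiv.Perm (Fin n), permHom F A n τ (permHom F A n σ x)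
          = permHom F A n (σ * τ) x := by
        intro σ
        have h : (permHom F A n τ).comp (permHom F A n σ) = permHom F A n (σ * τ) := by
          apply AlgHom.toLinearMap_injective
          ext y
          simp
        exact DFunLike.congr_fun h x
      simp only [LinearMap.sum_apply, AlgHom.toLinearMap_apply, map_sum, key]
      exact Equiv.sum_comp (Equiv.mulRight τ) (fun σ => permHom F A n σ x))

lemma symL_coe (x : ⨂[F] _ : Fin n, A) :
    (symL F A n x : ⨂[F] _ : Fin n, A) = ∑ σ : Equiv.Perm (Fin n), permHom F A n σ x := by
  change (∑ σ : Equiv.Perm (Fin n), (permHom F A n σ).toLinearMap) x = _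
  simp [LinearMap.sum_apply]

lemma symL_tprod_comp (τ : Equiv.Perm (Fin n)) (x : Fin n → A) :
    symL F A n (tprod F (fun i => x (τ i))) = symL F A n (tprod F x) := by
  apply Subtype.ext
  simp only [symL_coe, permHom_tprod]
  exact Equiv.sum_comp (Equiv.mulLeft τ) (fun σ => tprod F (fun i => x (σ i)))

lemma symL_mul (x : ⨂[F] _ : Fin n, A) (e : TS F A n) :
    symL F A n x * e = symL F A n (x * (e : ⨂[F] _ : Fin n, A)) := by
  apply Subtype.ext
  rw [Subalgebra.coe_mul]
  simp only [symL_coe, Finset.sum_mul, _root_.map_mul]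
  exact Finset.sum_congr rfl fun σ _ => by rw [e.2 σ]

lemma esym_one (a : A) : esym F A n 1 a = ∑ j : Fin n, tprod F (Function.update 1 j a) := by
  rw [esym, Finset.powersetCard_one, Finset.sum_map]
  refine Finset.sum_congr rfl fun j _ => ?_
  congr 1
  funext i
  simp [Function.update_apply]

lemma symL_mem {B : Type v} [CommRing B] [Algebra F B] (f : A →ₐ[F] B) (k : ℕ) :
    ∀ (T : Finset (Fin n)) (_ : T.card = k) (x : Fin n → A) (i : Fin n), i ∈ T →
      (∀ j, j ∉ T → x j = 1) → f (x i) = 0 →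
      symL F A n (tprod F x) ∈
        Ideal.span {x : TS F A n | ∃ a : A, f a = 0 ∧ x = esymT F A n 1 a} := by
  induction k with
  | zero =>
    intro T hT x i hi
    rw [Finset.card_eq_zero] at hT
    simp [hT] at hi
  | succ k ih =>
    intro T hT x i hi hx hf
    set I := Ideal.span {x : TS F A n | ∃ a : A, f a = 0 ∧ x = esymT F A n 1 a} with hI
    set y := Function.update x i 1 with hy
    have h1 : symL F A n (tprod F y) * esymT F A n 1 (x i) ∈ I :=
      I.mul_mem_left _ (Ideal.subset_span ⟨_, hf, rfl⟩)
    have h2 : symL F A n (tprod F y) * esymT F A n 1 (x i)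
        = ∑ j : Fin n, symL F A n (tprod F (Function.update y j (y j * x i))) := by
      rw [symL_mul]
      change symL F A n (_ * esym F A n 1 (x i)) = _
      rw [esym_one, Finset.mul_sum, map_sum]
      refine Finset.sum_congr rfl fun j _ => ?_
      rw [tprod_mul_tprod]
      congr 2
      funext l
      by_cases h : l = j
      · subst h; simp
      · simp [h]
    have hi' : i ∈ insert i Tᶜ := Finset.mem_insert_self _ _
    have h3 : ∀ j ∈ insert i Tᶜ,
        symL F A n (tprod F (Function.update y j (y j * x i))) = symL F A n (tprod F x) := by
      intro j hj
      rcases Finset.mem_insert.1 hj with rfl | hj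
      · congr 2
        simp [hy]
      · have hjT : j ∉ T := Finset.mem_compl.1 hj
        have hji : j ≠ i := fun h => hjT (h ▸ hi)
        rw [← symL_tprod_comp F A n (Equiv.swap i j) x]
        congr 2
        funext l
        by_cases hl : l = j
        · subst hl; simp [hy, hji, hx l hjT]
        · by_cases hl' : l = i
          · subst hl'; simp [hy, hl, hx j hjT]
          · simp [hy, hl, hl', Equiv.swap_apply_of_ne_of_ne]
    have h4 : ∀ j ∈ (insert i Tᶜ)ᶜ,
        symL F A n (tprod F (Function.update y j (y j * x i))) ∈ I := by
      intro j hj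
      simp only [Finset.mem_compl, Finset.mem_insert, not_or, not_not] at hj
      refine ih (T.erase i) (by rw [Finset.card_erase_of_mem hi, hT]; rfl) _ j
        (Finset.mem_erase.2 hj) ?_ (by simp [hf])
      intro l hl
      have hlj : l ≠ j := by
        rintro rfl
        exact hl (Finset.mem_erase.2 hj)
      rw [Function.update_of_ne hlj]
      by_cases hli : l = i
      · subst hli; simp [hy]
      · rw [hy, Function.update_of_ne hli]
        exact hx l fun h => hl (Finset.mem_erase.2 ⟨hli, h⟩)
    rw [h2, ← Finset.sum_add_sum_compl (insert i Tᶜ), Finset.sum_congr rfl h3,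
      Finset.sum_const, Ideal.add_mem_iff_left _ (Ideal.sum_mem _ h4)] at h1
    have hc : ((insert i Tᶜ).card : F) ≠ 0 :=
      Nat.cast_ne_zero.2 (Finset.card_ne_zero_of_mem hi')
    rw [← Nat.cast_smul_eq_nsmul F] at h1
    have h5 := (I.restrictScalars F).smul_mem ((insert i Tᶜ).card : F)⁻¹ h1
    rwa [smul_smul, inv_mul_cancel₀ hc, one_smul] at h5

lemma exists_section {B : Type v} [CommRing B] [Algebra F B] (f : A →ₐ[F] B) :
    ∃ g : B →ₗ[F] A, ∀ a, f (g (f a)) = f a := by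
  obtain ⟨s, hs⟩ := f.toLinearMap.rangeRestrict.exists_rightInverse_of_surjective
    (LinearMap.range_rangeRestrict _)
  obtain ⟨g, hg⟩ := LinearMap.exists_extend s
  refine ⟨g, fun a => ?_⟩
  have h1 := DFunLike.congr_fun hg (f.toLinearMap.rangeRestrict a)
  have h2 := congrArg Subtype.val (DFunLike.congr_fun hs (f.toLinearMap.rangeRestrict a))
  have h3 : g (f a) = s (f.toLinearMap.rangeRestrict a) := h1
  rw [h3]
  exact h2

lemma symL_sub_mem {B : Type v} [CommRing B] [Algebra F B] (f : A →ₐ[F] B)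
    (g : B →ₗ[F] A) (hg : ∀ a, f (g (f a)) = f a) (x : ⨂[F] _ : Fin n, A) :
    symL F A n (x - PiTensorProduct.map (fun _ => g) (mapPow F A n f x)) ∈
        Ideal.span {x : TS F A n | ∃ a : A, f a = 0 ∧ x = esymT F A n 1 a} := by
  set I := Ideal.span {x : TS F A n | ∃ a : A, f a = 0 ∧ x = esymT F A n 1 a} with hI
  induction x using PiTensorProduct.induction_on with
  | smul_tprod r a =>
    rw [map_smul, map_smul, ← smul_sub, map_smul]
    refine (I.restrictScalars F).smul_mem r ?_
    rw [mapPow_tprod, PiTensorProduct.map_tprod]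
    have h := (tprod F (s := fun _ : Fin n => A)).map_add_univ
      (fun i => g (f (a i))) (fun i => a i - g (f (a i)))
    have ha : ((fun i => g (f (a i))) + (fun i => a i - g (f (a i)))) = a := by
      funext i; simp
    rw [ha, ← Finset.sum_erase_add _ _ (Finset.mem_univ (Finset.univ : Finset (Fin n))),
      Finset.piecewise_univ] at h
    rw [h, add_sub_cancel_right, map_sum]
    refine (I.restrictScalars F).sum_mem fun S hS => ?_
    obtain ⟨i, hi⟩ : ∃ i, i ∉ S := by
      by_contra! hc
      exact (Finset.mem_erase.1 hS).1 (Finset.eq_univ_iff_forall.2 hc)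
    exact symL_mem F A n f _ Finset.univ rfl _ i (Finset.mem_univ _) (by simp)
      (by simp [hi, hg])
  | add x y hx hy =>
    rw [map_add, map_add, add_sub_add_comm, map_add]
    exact I.add_mem hx hy

/-- **Kernel of `TS^n f` in characteristic zero.** For a homomorphism `f : A → B` of
commutative algebras over a field `F` of characteristic zero, the kernel of
`TS^n f : TS^n_F(A) → TS^n_F(B)` (the restriction of `f^{⊗n}` to symmetric tensors) is
generated as an ideal by the elements `e_1^n(a)` with `a ∈ ker f`. -/
theorem ker_TSmap_eq_span_esym_one (B : Type v) [CommRing B] [Algebra F B] (f : A →ₐ[F] B) :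
    RingHom.ker (TSmap F A n (B := B) f) =
      Ideal.span {x : TS F A n | ∃ a : A, f a = 0 ∧ x = esymT F A n 1 a} := by
  apply le_antisymm
  · intro x hx
    obtain ⟨g, hg⟩ := exists_section F A f
    have h := symL_sub_mem F A n f g hg x
    have h0 : mapPow F A n f x = 0 := congrArg Subtype.val (RingHom.mem_ker.1 hx)
    rw [h0, map_zero, sub_zero] at h
    have h1 : symL F A n x = (n.factorial : F) • x := by
      apply Subtype.ext
      rw [symL_coe, Finset.sum_congr rfl fun σ _ => x.2 σ, Finset.sum_const, Finset.card_univ,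
        Fintype.card_perm, Fintype.card_fin, ← Nat.cast_smul_eq_nsmul F]
      rfl
    rw [h1] at h
    have h5 := (Submodule.restrictScalars F (Ideal.span
      {x : TS F A n | ∃ a : A, f a = 0 ∧ x = esymT F A n 1 a})).smul_mem (n.factorial : F)⁻¹ h
    rwa [smul_smul, inv_mul_cancel₀ (Nat.cast_ne_zero.2 n.factorial_ne_zero), one_smul] at h5
  · rw [Ideal.span_le]
    rintro _ ⟨a, ha, rfl⟩
    refine RingHom.mem_ker.2 (Subtype.ext ?_)
    change mapPow F A n f (esym F A n 1 a) = 0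
    rw [esym_one, map_sum]
    refine Finset.sum_eq_zero fun j _ => ?_
    rw [mapPow_tprod]
    exact (PiTensorProduct.tprod F).map_coord_zero j (by simp [ha])

end SymmetricProduct
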